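/- (Continuity of the optimal transport value) Let X, Y be Polish spaces and Φ : X × Y → ℝ a bounded continuous function. Then the value function V(μ,ν) = sup{∫ Φ dπ : π ∈ Π(μ,ν)} is continuous on P(X) × P(Y) with the weak topologies. -/

import Mathlib

open MeasureTheory

variable {X Y : Type*}

/-- The set of couplings of `μ` and `ν`. -/
def couplings [MetricSpace X] [MeasurableSpace X] [MetricSpace Y] [MeasurableSpace Y]
    (μ : ProbabilityMeasure X) (ν : ProbabilityMeasure Y) :
    Set (ProbabilityMeasure (X × Y)) :=
  {π | π.toMeasure.map Prod.fst = μ.toMeasure ∧ π.toMeasure.map Prod.snd = ν.toMeasure}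

open Filter Function ProbabilityTheory Set TopologicalSpace Topology
open scoped ENNReal

/-!
Sending a measure on `X × Y` to its pair of marginals is a continuous surjection onto
`P(X) × P(Y)` whose fibres are the sets of couplings. It is proper by Prokhorov's theorem, since
couplings of tight families are tight. It is also open: cut `X` and `Y` into finitely many small
disjoint open cells carrying almost all the mass of the marginals of `π`. Each cell keeps at least
a fraction `t`, close to `1`, of its mass for all marginals `(μ', ν')` near those of `π`, so some
coupling of `μ'` and `ν'` keeps at least the fraction `t` of the `π`-mass of every product cell
(the residual marginals have equal mass and can be coupled arbitrarily). Such a coupling is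
Lévy–Prokhorov close to `π`. Berge's maximum theorem then says that suprema of a continuous
function over the fibres of a proper open surjection vary continuously: properness gives upper
and openness gives lower semicontinuity.
-/

theorem continuous_sSup_image_fiber {α β γ : Type*} [TopologicalSpace α] [TopologicalSpace β]
    [ConditionallyCompleteLinearOrder γ] [TopologicalSpace γ] [OrderTopology γ]
    {f : α → β} {g : α → γ} (hf : IsProperMap f) (hfo : IsOpenMap f) (hfs : Surjective f)
    (hg : Continuous g) :
    Continuous fun b ↦ sSup (g '' (f ⁻¹' {b})) := by
  have fiber_compact (b : β) : IsCompact (f ⁻¹' {b}) := hf.isCompact_preimage isCompact_singleton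
  have fiber_nonempty (b : β) : (f ⁻¹' {b}).Nonempty := hfs b
  refine OrderTopology.continuous_iff.2 fun a ↦ ⟨?_, ?_⟩
  · have preimage_Ioi : (fun b ↦ sSup (g '' (f ⁻¹' {b}))) ⁻¹' Ioi a = f '' (g ⁻¹' Ioi a) := by
      ext b
      simp [lt_csSup_iff ((fiber_compact b).bddAbove_image hg.continuousOn)
        ((fiber_nonempty b).image g), and_comm]
    exact preimage_Ioi ▸ hfo _ (isOpen_Ioi.preimage hg)
  · have preimage_Iio : (fun b ↦ sSup (g '' (f ⁻¹' {b}))) ⁻¹' Iio a = (f '' (g ⁻¹' Ici a))ᶜ := by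
      ext b
      simp [(fiber_compact b).sSup_lt_iff_of_continuous (fiber_nonempty b) hg.continuousOn,
        imp_not_comm]
    exact preimage_Iio ▸ (hf.isClosedMap _ (isClosed_Ici.preimage hg)).isOpen_compl

section Coupling

variable [MeasurableSpace X] [MeasurableSpace Y]

theorem exists_fst_eq_snd_eq_of_measure_univ_eq {μ : Measure X} {ν : Measure Y}
    [IsFiniteMeasure μ] [IsFiniteMeasure ν] (h : μ univ = ν univ) :
    ∃ π : Measure (X × Y), π.fst = μ ∧ π.snd = ν := by
  rcases eq_or_ne (μ univ) 0 with hμ | hμ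
  · have hν : ν univ = 0 := h ▸ hμ
    rw [Measure.measure_univ_eq_zero] at hμ hν
    exact ⟨0, by simp [hμ], by simp [hν]⟩
  · have cancel : (μ univ)⁻¹ * μ univ = 1 := ENNReal.inv_mul_cancel hμ (measure_ne_top _ _)
    refine ⟨(μ univ)⁻¹ • μ.prod ν, ?_, ?_⟩
    · rw [Measure.fst, Measure.map_smul, Measure.map_fst_prod, ← h, smul_smul, cancel, one_smul]
    · rw [Measure.snd, Measure.map_smul, Measure.map_snd_prod, smul_smul, cancel, one_smul]

theorem exists_ge_fst_eq_snd_eq {μ : Measure X} {ν : Measure Y}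
    [IsFiniteMeasure μ] [IsFiniteMeasure ν] (h : μ univ = ν univ) {α : Measure (X × Y)}
    (hμ : α.fst ≤ μ) (hν : α.snd ≤ ν) :
    ∃ π : Measure (X × Y), α ≤ π ∧ π.fst = μ ∧ π.snd = ν := by
  have : IsFiniteMeasure α.fst := isFiniteMeasure_of_le μ hμ
  have : IsFiniteMeasure α.snd := isFiniteMeasure_of_le ν hν
  obtain ⟨ρ, hρ₁, hρ₂⟩ : ∃ ρ : Measure (X × Y), ρ.fst = μ - α.fst ∧ ρ.snd = ν - α.snd := by
    apply exists_fst_eq_snd_eq_of_measure_univ_eq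
    rw [Measure.sub_apply .univ hμ, Measure.sub_apply .univ hν, h, Measure.fst_univ,
      Measure.snd_univ]
  refine ⟨ρ + α, Measure.le_add_left le_rfl, ?_, ?_⟩
  · rw [Measure.fst_add, hρ₁, Measure.sub_add_cancel_of_le hμ]
  · rw [Measure.snd_add, hρ₂, Measure.sub_add_cancel_of_le hν]

variable {ι κ : Type*} [Fintype ι] [Fintype κ]

theorem sum_smul_cond_le {μ : Measure X} [IsFiniteMeasure μ] {A : ι → Set X}
    (hA : ∀ i, MeasurableSet (A i)) (hAd : Pairwise (Disjoint on A)) {c : ι → ℝ≥0∞}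
    (hc : ∀ i, c i ≤ μ (A i)) : ∑ i, c i • μ[|A i] ≤ μ := by
  refine Measure.le_iff.2 fun s hs ↦ ?_
  calc (∑ i, c i • μ[|A i]) s
      = ∑ i, c i * μ[s|A i] := by simp [Measure.finsetSum_apply]
    _ ≤ ∑ i, μ (A i ∩ s) := by
        gcongr with i
        grw [hc i, mul_comm, cond_mul_eq_inter (hA i)]
    _ = μ (⋃ i, A i ∩ s) := by
        rw [measure_iUnion (fun i j hij ↦ (hAd hij).mono inter_subset_left inter_subset_left)
          fun i ↦ (hA i).inter hs, tsum_fintype]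
    _ ≤ μ s := measure_mono (iUnion_subset fun _ ↦ inter_subset_right)

/-- The measure which is, with weight `w i j`, the product of `μ` conditioned on `A i` and `ν`
conditioned on `B j`. It realizes prescribed masses `w i j` on the cells `A i ×ˢ B j` while its
marginals stay dominated by `μ` and `ν`. -/
noncomputable def cellMixture (μ : Measure X) (ν : Measure Y) (A : ι → Set X) (B : κ → Set Y)
    (w : ι → κ → ℝ≥0∞) : Measure (X × Y) :=
  ∑ i, ∑ j, w i j • μ[|A i].prod ν[|B j]

variable {μ : Measure X} {ν : Measure Y} {A : ι → Set X} {B : κ → Set Y} {w : ι → κ → ℝ≥0∞}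

theorem cellMixture_prod (s : Set X) (t : Set Y) :
    cellMixture μ ν A B w (s ×ˢ t) = ∑ i, ∑ j, w i j * (μ[s|A i] * ν[t|B j]) := by
  simp [cellMixture, Measure.finsetSum_apply]

theorem fst_cellMixture_le [IsFiniteMeasure μ] (hA : ∀ i, MeasurableSet (A i))
    (hAd : Pairwise (Disjoint on A)) (hw : ∀ i, ∑ j, w i j ≤ μ (A i)) :
    (cellMixture μ ν A B w).fst ≤ μ := by
  refine le_trans (Measure.le_iff.2 fun s hs ↦ ?_) (sum_smul_cond_le hA hAd hw)
  rw [Measure.fst_apply hs, ← prod_univ, cellMixture_prod]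
  simp only [Measure.finsetSum_apply, Measure.smul_apply, smul_eq_mul, Finset.sum_mul]
  gcongr
  exact mul_le_of_le_one_right' prob_le_one

theorem snd_cellMixture_le [IsFiniteMeasure ν] (hB : ∀ j, MeasurableSet (B j))
    (hBd : Pairwise (Disjoint on B)) (hw : ∀ j, ∑ i, w i j ≤ ν (B j)) :
    (cellMixture μ ν A B w).snd ≤ ν := by
  refine le_trans (Measure.le_iff.2 fun t ht ↦ ?_) (sum_smul_cond_le hB hBd hw)
  rw [Measure.snd_apply ht, ← univ_prod, cellMixture_prod, Finset.sum_comm]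
  simp only [Measure.finsetSum_apply, Measure.smul_apply, smul_eq_mul, Finset.sum_mul]
  gcongr
  exact mul_le_of_le_one_left' prob_le_one

variable [IsFiniteMeasure μ] [IsFiniteMeasure ν]

theorem le_cellMixture_apply_prod {i : ι} {j : κ} (hA : w i j ≤ μ (A i)) (hB : w i j ≤ ν (B j)) :
    w i j ≤ cellMixture μ ν A B w (A i ×ˢ B j) := by
  rcases eq_or_ne (w i j) 0 with h0 | h0
  · exact h0 ▸ zero_le
  have hμA : μ (A i) ≠ 0 := fun h ↦ h0 (le_zero_iff.1 (h ▸ hA))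
  have hνB : ν (B j) ≠ 0 := fun h ↦ h0 (le_zero_iff.1 (h ▸ hB))
  calc w i j = w i j * (μ[A i|A i] * ν[B j|B j]) := by
        rw [cond_apply_self hμA (measure_ne_top _ _), cond_apply_self hνB (measure_ne_top _ _),
          one_mul, mul_one]
    _ ≤ ∑ j', w i j' * (μ[A i|A i] * ν[B j|B j']) :=
        Finset.single_le_sum_of_canonicallyOrdered
          (f := fun j' ↦ w i j' * (μ[A i|A i] * ν[B j|B j'])) (Finset.mem_univ j)
    _ ≤ ∑ i', ∑ j', w i' j' * (μ[A i|A i'] * ν[B j|B j']) :=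
        Finset.single_le_sum_of_canonicallyOrdered
          (f := fun i' ↦ ∑ j', w i' j' * (μ[A i|A i'] * ν[B j|B j'])) (Finset.mem_univ i)
    _ = _ := (cellMixture_prod ..).symm

theorem exists_fst_eq_snd_eq_le_apply_prod (h : μ univ = ν univ)
    (hA : ∀ i, MeasurableSet (A i)) (hAd : Pairwise (Disjoint on A))
    (hB : ∀ j, MeasurableSet (B j)) (hBd : Pairwise (Disjoint on B))
    (hwμ : ∀ i, ∑ j, w i j ≤ μ (A i)) (hwν : ∀ j, ∑ i, w i j ≤ ν (B j)) :
    ∃ π : Measure (X × Y), π.fst = μ ∧ π.snd = ν ∧ ∀ i j, w i j ≤ π (A i ×ˢ B j) := by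
  obtain ⟨π, hle, hμ, hν⟩ :=
    exists_ge_fst_eq_snd_eq h (fst_cellMixture_le hA hAd hwμ) (snd_cellMixture_le hB hBd hwν)
  have w_le (i : ι) (j : κ) : w i j ≤ cellMixture μ ν A B w (A i ×ˢ B j) :=
    le_cellMixture_apply_prod
      ((Finset.single_le_sum_of_canonicallyOrdered (Finset.mem_univ j)).trans (hwμ i))
      ((Finset.single_le_sum_of_canonicallyOrdered (f := (w · j)) (Finset.mem_univ i)).trans
        (hwν j))
  exact ⟨π, hμ, hν, fun i j ↦ (w_le i j).trans (hle _)⟩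

theorem sum_measure_prod_le_fst (π : Measure (X × Y)) {s : Set X} (hs : MeasurableSet s)
    (hB : ∀ j, MeasurableSet (B j)) (hBd : Pairwise (Disjoint on B)) :
    ∑ j, π (s ×ˢ B j) ≤ π.fst s := by
  calc ∑ j, π (s ×ˢ B j)
      = π (⋃ j, s ×ˢ B j) := by
        rw [measure_iUnion (fun i j hij ↦ (hBd hij).set_prod_right _ _) fun j ↦ hs.prod (hB j),
          tsum_fintype]
    _ ≤ π (Prod.fst ⁻¹' s) := measure_mono (iUnion_subset fun _ _ hp ↦ hp.1)
    _ = π.fst s := (Measure.fst_apply hs).symm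

theorem sum_measure_prod_le_snd (π : Measure (X × Y)) (hA : ∀ i, MeasurableSet (A i))
    (hAd : Pairwise (Disjoint on A)) {t : Set Y} (ht : MeasurableSet t) :
    ∑ i, π (A i ×ˢ t) ≤ π.snd t := by
  calc ∑ i, π (A i ×ˢ t)
      = π (⋃ i, A i ×ˢ t) := by
        rw [measure_iUnion (fun i j hij ↦ (hAd hij).set_prod_left _ _) fun i ↦ (hA i).prod ht,
          tsum_fintype]
    _ ≤ π (Prod.snd ⁻¹' t) := measure_mono (iUnion_subset fun _ _ hp ↦ hp.2)
    _ = π.snd t := (Measure.snd_apply ht).symm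

theorem exists_fst_eq_snd_eq_mul_le_apply_prod {ι κ : Type*} [Finite ι] [Finite κ]
    {A : ι → Set X} {B : κ → Set Y} (π : Measure (X × Y)) (h : μ univ = ν univ)
    (hA : ∀ i, MeasurableSet (A i)) (hAd : Pairwise (Disjoint on A))
    (hB : ∀ j, MeasurableSet (B j)) (hBd : Pairwise (Disjoint on B)) {t : ℝ≥0∞}
    (hμ : ∀ i, t * π.fst (A i) ≤ μ (A i)) (hν : ∀ j, t * π.snd (B j) ≤ ν (B j)) :
    ∃ π' : Measure (X × Y), π'.fst = μ ∧ π'.snd = ν ∧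
      ∀ i j, t * π (A i ×ˢ B j) ≤ π' (A i ×ˢ B j) := by
  cases nonempty_fintype ι
  cases nonempty_fintype κ
  refine exists_fst_eq_snd_eq_le_apply_prod h hA hAd hB hBd (fun i ↦ ?_) fun j ↦ ?_
  · grw [← Finset.mul_sum, sum_measure_prod_le_fst π (hA i) hB hBd, hμ i]
  · grw [← Finset.mul_sum, sum_measure_prod_le_snd π hA hAd (hB j), hν j]

end Coupling

section SmallCells

theorem measure_frontier_disjointed_eq_zero [TopologicalSpace X] [MeasurableSpace X]
    {μ : Measure X} {B : ℕ → Set X} (hB : ∀ i, μ (frontier (B i)) = 0) (n : ℕ) :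
    μ (frontier (disjointed B n)) = 0 := by
  refine disjointedRec (p := fun s ↦ μ (frontier s) = 0) (fun s j hs ↦ ?_) (hB n)
  refine measure_mono_null ?_ (measure_union_null hs (hB j))
  grw [sdiff_eq, frontier_inter_subset, frontier_compl, inter_subset_left, inter_subset_right]

variable [PseudoMetricSpace X] [MeasurableSpace X] [OpensMeasurableSpace X]

theorem exists_isOpen_null_frontier_dist_lt_cover [SeparableSpace X] [Nonempty X]
    (μ : Measure X) [SFinite μ] {δ : ℝ} (hδ : 0 < δ) :
    ∃ B : ℕ → Set X, (∀ i, IsOpen (B i)) ∧ (∀ i, μ (frontier (B i)) = 0) ∧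
      (∀ i, ∀ x ∈ B i, ∀ y ∈ B i, dist x y < δ) ∧ ⋃ i, B i = univ := by
  have exists_radius (i : ℕ) := exists_null_frontier_thickening μ
    {denseSeq X i} (show δ / 4 < δ / 2 by linarith)
  choose r hr hrμ using exists_radius
  simp only [Metric.thickening_singleton] at hrμ
  refine ⟨_, fun _ ↦ Metric.isOpen_ball, hrμ, fun i x hx y hy ↦ ?_, ?_⟩
  · rw [Metric.mem_ball] at hx hy
    linarith [dist_triangle_right x y (denseSeq X i), (hr i).2]
  · refine iUnion_eq_univ_iff.2 fun x ↦ ?_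
    obtain ⟨i, hi⟩ := (denseRange_denseSeq X).exists_dist_lt x
      (show 0 < δ / 4 by linarith)
    exact ⟨i, hi.trans (hr i).1⟩

theorem exists_disjoint_isOpen_dist_lt_measure_compl_le [SeparableSpace X]
    (μ : Measure X) [IsFiniteMeasure μ] {δ : ℝ} (hδ : 0 < δ) {ε : ℝ≥0∞} (hε : 0 < ε) :
    ∃ (n : ℕ) (A : Fin n → Set X), (∀ i, IsOpen (A i)) ∧ Pairwise (Disjoint on A) ∧
      (∀ i, ∀ x ∈ A i, ∀ y ∈ A i, dist x y < δ) ∧ μ (⋃ i, A i)ᶜ ≤ ε := by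
  rcases isEmpty_or_nonempty X with hX | hX
  · exact ⟨0, fun _ ↦ ∅, by simp, fun i ↦ i.elim0, by simp, by simp [eq_empty_of_isEmpty]⟩
  obtain ⟨B, hBo, hBf, hBδ, hBu⟩ := exists_isOpen_null_frontier_dist_lt_cover μ hδ
  let D : ℕ → Set X := disjointed B
  have hDm (i : ℕ) : NullMeasurableSet (D i) μ :=
    (MeasurableSet.disjointed (fun j ↦ (hBo j).measurableSet) i).nullMeasurableSet
  have hDd : Pairwise (Disjoint on D) := disjoint_disjointed B
  have hDf : μ (⋃ i, frontier (D i)) = 0 :=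
    measure_iUnion_null (measure_frontier_disjointed_eq_zero hBf)
  obtain ⟨n, hn⟩ : ∃ n, μ (⋃ i ≥ n, D i) ≤ ε :=
    ((tendsto_measure_biUnion_Ici_zero_of_pairwise_disjoint hDm hDd).eventually_le_const
      hε).exists
  have compl_subset :
      (⋃ i : Fin n, interior (D i))ᶜ ⊆ (⋃ i ≥ n, D i) ∪ ⋃ i, frontier (D i) := by
    intro x hx
    obtain ⟨i, hi⟩ : ∃ i, x ∈ D i := by rw [← mem_iUnion, iUnion_disjointed, hBu]; trivial
    rcases le_or_gt n i with hni | hin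
    · exact .inl (mem_iUnion₂_of_mem hni hi)
    · exact .inr (mem_iUnion_of_mem i
        ⟨subset_closure hi, fun hxi ↦ hx (mem_iUnion_of_mem (⟨i, hin⟩ : Fin n) hxi)⟩)
  refine ⟨n, fun i ↦ interior (D i), fun _ ↦ isOpen_interior, fun i j hij ↦ ?_,
    fun i x hx y hy ↦ hBδ i x ?_ y ?_, ?_⟩
  · exact (hDd (Fin.val_injective.ne hij)).mono interior_subset interior_subset
  · exact disjointed_subset B i (interior_subset hx)
  · exact disjointed_subset B i (interior_subset hy)
  · grw [compl_subset, measure_union_le, hDf, add_zero, hn]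

end SmallCells

section LevyProkhorov

theorem exists_forall_levyProkhorovDist_le_mem {Ω : Type*} [PseudoMetricSpace Ω]
    [MeasurableSpace Ω] [OpensMeasurableSpace Ω] {π : ProbabilityMeasure Ω}
    {U : Set (ProbabilityMeasure Ω)} (hU : U ∈ 𝓝 π) :
    ∃ ε > 0, ∀ π' : ProbabilityMeasure Ω,
      levyProkhorovDist π.toMeasure π'.toMeasure ≤ ε → π' ∈ U := by
  obtain ⟨ε, hε, hεU⟩ := Metric.nhds_basis_closedBall.mem_iff.1
    (LevyProkhorov.continuous_toMeasure_probabilityMeasure.continuousAt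
      (x := LevyProkhorov.ofMeasure π) hU)
  refine ⟨ε, hε, fun π' h ↦ hεU (a := LevyProkhorov.ofMeasure π') ?_⟩
  exact (levyProkhorovDist_comm _ _).trans_le h

theorem levyProkhorovDist_le_of_one_le_sum_min [PseudoMetricSpace X] [MeasurableSpace X]
    [OpensMeasurableSpace X] {μ ν : Measure X} [IsProbabilityMeasure μ] [IsProbabilityMeasure ν]
    {ι : Type*} [Fintype ι] {C : ι → Set X} (hC : ∀ i, MeasurableSet (C i))
    (hCd : Pairwise (Disjoint on C)) {δ : ℝ} (hδ : 0 ≤ δ)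
    (hCδ : ∀ i, ∀ x ∈ C i, ∀ y ∈ C i, dist x y ≤ δ)
    (h : 1 ≤ ∑ i, min (μ (C i)) (ν (C i)) + ENNReal.ofReal δ) :
    levyProkhorovDist μ ν ≤ δ := by
  classical
  refine levyProkhorovDist_le_of_forall_le μ ν hδ fun ε S hε hS ↦ ?_
  let I : Finset ι := {i | (C i ∩ S).Nonempty}
  have hdisj (s : Finset ι) : (s : Set ι).PairwiseDisjoint C := hCd.set_pairwise _
  have outside : μ S + ∑ i ∈ Iᶜ, min (μ (C i)) (ν (C i)) ≤ 1 := by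
    have disj : Disjoint S (⋃ i ∈ Iᶜ, C i) := by
      refine disjoint_iUnion₂_right.2 fun i hi ↦ ?_
      simpa [I, not_nonempty_iff_eq_empty, disjoint_iff_inter_eq_empty, inter_comm] using hi
    calc μ S + ∑ i ∈ Iᶜ, min (μ (C i)) (ν (C i))
        ≤ μ S + ∑ i ∈ Iᶜ, μ (C i) := by gcongr; exact min_le_left _ _
      _ = μ (S ∪ ⋃ i ∈ Iᶜ, C i) := by
          rw [measure_union' disj hS, measure_biUnion_finset (hdisj _) fun i _ ↦ hC i]
      _ ≤ 1 := prob_le_one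
  have inside : ∑ i ∈ I, min (μ (C i)) (ν (C i)) ≤ ν (Metric.thickening ε S) := by
    calc ∑ i ∈ I, min (μ (C i)) (ν (C i))
        ≤ ∑ i ∈ I, ν (C i) := by gcongr; exact min_le_right _ _
      _ = ν (⋃ i ∈ I, C i) := (measure_biUnion_finset (hdisj _) fun i _ ↦ hC i).symm
      _ ≤ ν (Metric.thickening ε S) := by
          refine measure_mono (iUnion₂_subset fun i hi x hx ↦ ?_)
          obtain ⟨y, hyC, hyS⟩ := (Finset.mem_filter.1 hi).2
          exact Metric.mem_thickening_iff.2 ⟨y, hyS, (hCδ i x hx y hyC).trans_lt hε⟩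
  have finite_outside : ∑ i ∈ Iᶜ, min (μ (C i)) (ν (C i)) ≠ ∞ :=
    ne_top_of_le_ne_top ENNReal.one_ne_top (le_add_self.trans outside)
  refine ENNReal.le_of_add_le_add_right finite_outside (outside.trans (h.trans ?_))
  rw [← Finset.sum_add_sum_compl I, add_right_comm]
  gcongr

theorem pairwise_disjoint_prod {α β ι κ : Type*} {A : ι → Set α} {B : κ → Set β}
    (hA : Pairwise (Disjoint on A)) (hB : Pairwise (Disjoint on B)) :
    Pairwise (Disjoint on fun p : ι × κ ↦ A p.1 ×ˢ B p.2) := by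
  rw [← pairwise_univ, ← univ_prod_univ]
  exact PairwiseDisjoint.prod (hA.set_pairwise _) (hB.set_pairwise _)

variable [MeasurableSpace X] [MeasurableSpace Y]

theorem measure_iUnion_prod_iUnion {ι κ : Type*} [Fintype ι] [Fintype κ] {A : ι → Set X}
    {B : κ → Set Y} (π : Measure (X × Y))
    (hA : ∀ i, MeasurableSet (A i)) (hAd : Pairwise (Disjoint on A))
    (hB : ∀ j, MeasurableSet (B j)) (hBd : Pairwise (Disjoint on B)) :
    π ((⋃ i, A i) ×ˢ ⋃ j, B j) = ∑ p : ι × κ, π (A p.1 ×ˢ B p.2) := by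
  rw [← iUnion_prod, measure_iUnion (pairwise_disjoint_prod hAd hBd)
    fun p ↦ (hA p.1).prod (hB p.2), tsum_fintype]

theorem measure_prod_compl_le (π : Measure (X × Y)) {s : Set X} {t : Set Y}
    (hs : MeasurableSet s) (ht : MeasurableSet t) :
    π (s ×ˢ t)ᶜ ≤ π.fst sᶜ + π.snd tᶜ := by
  rw [compl_prod_eq_union, Measure.fst_apply hs.compl, Measure.snd_apply ht.compl]
  simpa only [prod_univ, univ_prod] using measure_union_le _ _

theorem levyProkhorovDist_le_of_mul_le_apply_prod [PseudoMetricSpace X] [OpensMeasurableSpace X]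
    [PseudoMetricSpace Y] [OpensMeasurableSpace Y] [SecondCountableTopologyEither X Y]
    {ι κ : Type*} [Finite ι] [Finite κ]
    {π π' : Measure (X × Y)} [IsProbabilityMeasure π] [IsProbabilityMeasure π']
    {A : ι → Set X} {B : κ → Set Y}
    (hA : ∀ i, MeasurableSet (A i)) (hAd : Pairwise (Disjoint on A))
    (hB : ∀ j, MeasurableSet (B j)) (hBd : Pairwise (Disjoint on B)) {δ : ℝ} (hδ : 0 ≤ δ)
    (hAδ : ∀ i, ∀ x ∈ A i, ∀ y ∈ A i, dist x y ≤ δ)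
    (hBδ : ∀ j, ∀ x ∈ B j, ∀ y ∈ B j, dist x y ≤ δ)
    (hπA : π.fst (⋃ i, A i)ᶜ ≤ ENNReal.ofReal δ) (hπB : π.snd (⋃ j, B j)ᶜ ≤ ENNReal.ofReal δ)
    (h : ∀ i j, (1 - ENNReal.ofReal δ) * π (A i ×ˢ B j) ≤ π' (A i ×ˢ B j)) :
    levyProkhorovDist π π' ≤ 3 * δ := by
  cases nonempty_fintype ι
  cases nonempty_fintype κ
  let C (p : ι × κ) : Set (X × Y) := A p.1 ×ˢ B p.2
  have hC (p : ι × κ) : MeasurableSet (C p) := (hA p.1).prod (hB p.2)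
  refine levyProkhorovDist_le_of_one_le_sum_min hC (pairwise_disjoint_prod hAd hBd)
    (by positivity) (fun p x hx y hy ↦ ?_) ?_
  · have dist_le : dist x y ≤ δ :=
      max_le (hAδ p.1 _ hx.1 _ hy.1) (hBδ p.2 _ hx.2 _ hy.2)
    linarith
  set d := ENNReal.ofReal δ
  have one_le : 1 ≤ ∑ p, π (C p) + 2 * d := by
    rw [← measure_iUnion_prod_iUnion π hA hAd hB hBd, ← prob_add_prob_compl (μ := π)
      ((MeasurableSet.iUnion hA).prod (MeasurableSet.iUnion hB))]
    grw [measure_prod_compl_le π (.iUnion hA) (.iUnion hB), hπA, hπB, two_mul]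
  have le_min (p : ι × κ) : (1 - d) * π (C p) ≤ min (π (C p)) (π' (C p)) :=
    le_min (mul_le_of_le_one_left' tsub_le_self) (h p.1 p.2)
  have sum_le_one : ∑ p, π (C p) ≤ 1 :=
    (measure_iUnion_prod_iUnion π hA hAd hB hBd).symm.trans_le prob_le_one
  calc 1 ≤ 1 * ∑ p, π (C p) + 2 * d := by rwa [one_mul]
    _ ≤ ((1 - d) + d) * ∑ p, π (C p) + 2 * d := by gcongr; exact le_tsub_add
    _ ≤ (1 - d) * ∑ p, π (C p) + d + 2 * d := by
        rw [add_mul]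
        gcongr
        exact mul_le_of_le_one_right' sum_le_one
    _ ≤ ∑ p, min (π (C p)) (π' (C p)) + (d + 2 * d) := by
        rw [Finset.mul_sum, add_assoc]
        gcongr with p
        exact le_min p
    _ = ∑ p, min (π (C p)) (π' (C p)) + ENNReal.ofReal (3 * δ) := by
        rw [ENNReal.ofReal_mul (by norm_num), ENNReal.ofReal_ofNat]
        ring

end LevyProkhorov

section Marginals

variable [MeasurableSpace X] [MeasurableSpace Y]

/-- The pair of marginals of a probability measure on a product; its fibres are the sets of
couplings. -/
noncomputable def marginals (π : ProbabilityMeasure (X × Y)) :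
    ProbabilityMeasure X × ProbabilityMeasure Y :=
  (π.map measurable_fst.aemeasurable, π.map measurable_snd.aemeasurable)

theorem marginals_eq_iff {π : ProbabilityMeasure (X × Y)}
    {p : ProbabilityMeasure X × ProbabilityMeasure Y} :
    marginals π = p ↔ π.toMeasure.fst = p.1.toMeasure ∧ π.toMeasure.snd = p.2.toMeasure :=
  Prod.ext_iff.trans (and_congr Subtype.ext_iff Subtype.ext_iff)

theorem surjective_marginals : Surjective (marginals : ProbabilityMeasure (X × Y) → _) :=
  fun p ↦ ⟨p.1.prod p.2, by simp [marginals]⟩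

theorem isProperMap_marginals [TopologicalSpace X] [PolishSpace X] [BorelSpace X]
    [TopologicalSpace Y] [PolishSpace Y] [BorelSpace Y] :
    IsProperMap (marginals : ProbabilityMeasure (X × Y) → _) := by
  have hc : Continuous (marginals : ProbabilityMeasure (X × Y) → _) :=
    (ProbabilityMeasure.continuous_map continuous_fst).prodMk
      (ProbabilityMeasure.continuous_map continuous_snd)
  refine isProperMap_iff_isCompact_preimage.2 ⟨hc, fun K hK ↦ ?_⟩
  let := upgradeIsCompletelyMetrizable X
  let := upgradeIsCompletelyMetrizable Y
  have tight_fst := isTightMeasureSet_of_isCompact_closure (hK.image continuous_fst).closure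
  have tight_snd := isTightMeasureSet_of_isCompact_closure (hK.image continuous_snd).closure
  have tight : IsTightMeasureSet
      {π : Measure (X × Y) | ∃ π' ∈ marginals ⁻¹' K, (π' : Measure (X × Y)) = π} := by
    refine .prodMk (tight_fst.subset ?_) (tight_snd.subset ?_)
    · rintro _ ⟨_, ⟨π, hπ, rfl⟩, rfl⟩
      exact ⟨_, mem_image_of_mem _ hπ, rfl⟩
    · rintro _ ⟨_, ⟨π, hπ, rfl⟩, rfl⟩
      exact ⟨_, mem_image_of_mem _ hπ, rfl⟩
  exact (hK.isClosed.preimage hc).closure_eq ▸ isCompact_closure_of_isTightMeasureSet tight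

theorem eventually_forall_mul_measure_le {ι : Type*} [Finite ι] [TopologicalSpace X]
    [HasOuterApproxClosed X] [OpensMeasurableSpace X] (μ : ProbabilityMeasure X)
    {A : ι → Set X} (hA : ∀ i, IsOpen (A i)) {t : ℝ≥0∞} (ht : t < 1) :
    ∀ᶠ μ' : ProbabilityMeasure X in 𝓝 μ,
      ∀ i, t * μ.toMeasure (A i) ≤ μ'.toMeasure (A i) := by
  refine eventually_all.2 fun i ↦ ?_
  rcases eq_or_ne (μ.toMeasure (A i)) 0 with h0 | h0
  · simp [h0]
  have mul_lt : t * μ.toMeasure (A i) < μ.toMeasure (A i) := by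
    simpa using ENNReal.mul_lt_mul_left h0 (measure_ne_top _ _) ht
  have lt_liminf := mul_lt.trans_le
    (ProbabilityMeasure.le_liminf_measure_open_of_tendsto (tendsto_id (x := 𝓝 μ)) (hA i))
  exact (eventually_lt_of_lt_liminf lt_liminf).mono fun _ ↦ le_of_lt

theorem eventually_exists_marginals_eq_levyProkhorovDist_le [PseudoMetricSpace X]
    [SecondCountableTopology X] [OpensMeasurableSpace X] [PseudoMetricSpace Y]
    [SecondCountableTopology Y] [OpensMeasurableSpace Y] (π : ProbabilityMeasure (X × Y))
    {ε : ℝ} (hε : 0 < ε) :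
    ∀ᶠ p in 𝓝 (marginals π), ∃ π' : ProbabilityMeasure (X × Y),
      marginals π' = p ∧ levyProkhorovDist π.toMeasure π'.toMeasure ≤ ε := by
  obtain ⟨δ, hδ, rfl⟩ : ∃ δ : ℝ, 0 < δ ∧ 3 * δ = ε := ⟨ε / 3, by positivity, by ring⟩
  have hδ' : 0 < ENNReal.ofReal δ := ENNReal.ofReal_pos.2 hδ
  obtain ⟨m, A, hAo, hAd, hAδ, hAc⟩ :=
    exists_disjoint_isOpen_dist_lt_measure_compl_le π.toMeasure.fst hδ hδ'
  obtain ⟨n, B, hBo, hBd, hBδ, hBc⟩ :=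
    exists_disjoint_isOpen_dist_lt_measure_compl_le π.toMeasure.snd hδ hδ'
  have hA (i : Fin m) : MeasurableSet (A i) := (hAo i).measurableSet
  have hB (j : Fin n) : MeasurableSet (B j) := (hBo j).measurableSet
  have lt_one : 1 - ENNReal.ofReal δ < 1 :=
    ENNReal.sub_lt_self ENNReal.one_ne_top one_ne_zero hδ'.ne'
  filter_upwards [(eventually_forall_mul_measure_le _ hAo lt_one).prod_nhds
    (eventually_forall_mul_measure_le _ hBo lt_one)] with ⟨μ', ν'⟩ ⟨hμ', hν'⟩
  obtain ⟨π', hfst, hsnd, hle⟩ := exists_fst_eq_snd_eq_mul_le_apply_prod π.toMeasure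
    (measure_univ.trans measure_univ.symm) hA hAd hB hBd hμ' hν'
  have hπ' : IsProbabilityMeasure π' := ⟨by rw [← Measure.fst_univ, hfst, measure_univ]⟩
  refine ⟨⟨π', hπ'⟩, marginals_eq_iff.2 ⟨hfst, hsnd⟩, ?_⟩
  exact levyProkhorovDist_le_of_mul_le_apply_prod (π' := π')
    hA hAd hB hBd hδ.le (fun i x hx y hy ↦ (hAδ i x hx y hy).le)
    (fun j x hx y hy ↦ (hBδ j x hx y hy).le) hAc hBc hle

theorem isOpenMap_marginals [TopologicalSpace X] [PseudoMetrizableSpace X]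
    [SecondCountableTopology X] [OpensMeasurableSpace X]
    [TopologicalSpace Y] [PseudoMetrizableSpace Y] [SecondCountableTopology Y]
    [OpensMeasurableSpace Y] : IsOpenMap (marginals : ProbabilityMeasure (X × Y) → _) := by
  let := pseudoMetrizableSpacePseudoMetric X
  let := pseudoMetrizableSpacePseudoMetric Y
  refine isOpenMap_iff_nhds_le.2 fun π U hU ↦ ?_
  obtain ⟨ε, hε, hεU⟩ := exists_forall_levyProkhorovDist_le_mem hU
  filter_upwards [eventually_exists_marginals_eq_levyProkhorovDist_le π hε] with p ⟨π', hp, hπ'⟩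
  exact hp ▸ hεU π' hπ'

theorem value_function_continuous_general [TopologicalSpace X] [PolishSpace X] [BorelSpace X]
    [TopologicalSpace Y] [PolishSpace Y] [BorelSpace Y] {γ : Type*}
    [ConditionallyCompleteLinearOrder γ] [TopologicalSpace γ] [OrderTopology γ]
    {J : ProbabilityMeasure (X × Y) → γ} (hJ : Continuous J) :
    Continuous fun p ↦ sSup (J '' (marginals ⁻¹' {p})) :=
  continuous_sSup_image_fiber isProperMap_marginals isOpenMap_marginals surjective_marginals hJ

end Marginals

theorem preimage_marginals_singleton [MetricSpace X] [MeasurableSpace X] [MetricSpace Y]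
    [MeasurableSpace Y] (p : ProbabilityMeasure X × ProbabilityMeasure Y) :
    marginals ⁻¹' {p} = couplings p.1 p.2 :=
  ext fun _ ↦ marginals_eq_iff

theorem continuous_integral_of_forall_abs_le {Ω : Type*} [TopologicalSpace Ω]
    [MeasurableSpace Ω] [OpensMeasurableSpace Ω] {f : Ω → ℝ} (hf : Continuous f) {C : ℝ}
    (hC : ∀ x, |f x| ≤ C) :
    Continuous fun μ : ProbabilityMeasure Ω ↦ ∫ x, f x ∂μ.toMeasure :=
  ProbabilityMeasure.continuous_integral_boundedContinuousFunction
    (.ofNormedAddCommGroup f hf C hC)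

/-- The optimal transport value function is continuous in the marginals for the weak
topologies, when the surplus `Φ` is bounded continuous. -/
theorem value_function_continuous
    [MetricSpace X] [CompleteSpace X] [SecondCountableTopology X]
    [MeasurableSpace X] [BorelSpace X]
    [MetricSpace Y] [CompleteSpace Y] [SecondCountableTopology Y]
    [MeasurableSpace Y] [BorelSpace Y]
    (Φ : X × Y → ℝ) (hΦc : Continuous Φ) (hΦb : ∃ C, ∀ p, |Φ p| ≤ C) :
    Continuous (fun p : ProbabilityMeasure X × ProbabilityMeasure Y =>
      sSup {r : ℝ | ∃ π ∈ couplings p.1 p.2, r = ∫ q, Φ q ∂π.toMeasure}) := by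
  obtain ⟨C, hC⟩ := hΦb
  simpa only [preimage_marginals_singleton, image, eq_comm] using
    value_function_continuous_general (continuous_integral_of_forall_abs_le hΦc hC)
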